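/- For every set F of finitary operations on a countably infinite set X, the smallest local clone containing F equals Pol(Inv(F)). -/

import Mathlib

/-- A finitary operation on `X`: an `(n+1)`-ary function `X^(n+1) → X` (arities are ≥ 1). -/
abbrev FinOp (X : Type) := Σ n : ℕ, (Fin (n + 1) → X) → X

/-- A finitary relation on `X`: an `(m+1)`-ary relation `ρ ⊆ X^(m+1)` (arities are ≥ 1). -/
abbrev FinRel (X : Type) := Σ m : ℕ, Set (Fin (m + 1) → X)

variable {X : Type}

/-- `C` is a clone: it contains all projections and is closed under composition. -/
def IsClone (C : Set (FinOp X)) : Prop :=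
  (∀ (n : ℕ) (k : Fin (n + 1)), (⟨n, fun x => x k⟩ : FinOp X) ∈ C) ∧
  (∀ (n m : ℕ) (f : (Fin (n + 1) → X) → X) (g : Fin (n + 1) → (Fin (m + 1) → X) → X),
    (⟨n, f⟩ : FinOp X) ∈ C → (∀ i, (⟨m, g i⟩ : FinOp X) ∈ C) →
    (⟨m, fun x => f fun i => g i x⟩ : FinOp X) ∈ C)

/-- `C` is a local clone: a clone each of whose `n`-ary fragments is closed in the
product topology on `X^(X^n)`, where `X` carries the discrete topology. -/
def IsLocalClone (C : Set (FinOp X)) : Prop :=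
  IsClone C ∧
  ∀ n : ℕ,
    letI : TopologicalSpace X := ⊥
    IsClosed {f : (Fin (n + 1) → X) → X | (⟨n, f⟩ : FinOp X) ∈ C}

/-- The smallest local clone containing `F` (the local clone generated by `F`). -/
def cllClosure (F : Set (FinOp X)) : Set (FinOp X) :=
  ⋂₀ {C : Set (FinOp X) | IsLocalClone C ∧ F ⊆ C}

/-- `f` preserves the relation `ρ`. -/
def Preserves {n m : ℕ} (f : (Fin (n + 1) → X) → X) (ρ : Set (Fin (m + 1) → X)) : Prop :=
  ∀ r : Fin (n + 1) → Fin (m + 1) → X, (∀ i, r i ∈ ρ) → (fun j => f fun i => r i j) ∈ ρ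

/-- `Pol R`: all finitary operations preserving every relation in `R`. -/
def Polymorphisms (R : Set (FinRel X)) : Set (FinOp X) :=
  {f | ∀ ρ ∈ R, Preserves f.2 ρ.2}

/-- `Inv F`: all finitary relations invariant under every operation in `F`. -/
def Invariants (F : Set (FinOp X)) : Set (FinRel X) :=
  {ρ | ∀ f ∈ F, Preserves f.2 ρ.2}

/-- The clone of projections. -/
def projClone (X : Type) : Set (FinOp X) :=
  {f | ∃ k : Fin (f.1 + 1), f.2 = fun x => x k}

/-- For every set `F` of finitary operations on a countably infinite set `X`,
the smallest local clone containing `F` equals `Pol (Inv F)`. -/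
theorem cllClosure_eq_pol_inv (X : Type) [Countable X] [Infinite X]
    (F : Set (FinOp X)) : cllClosure F = Polymorphisms (Invariants F) := by
  apply Set.Subset.antisymm
  · apply Set.sInter_subset_of_mem
    refine ⟨⟨⟨?_, ?_⟩, ?_⟩, ?_⟩
    · intro n k ρ _ r hr
      exact hr k
    · intro n m f g hf hg ρ hρ r hr
      exact hf ρ hρ (fun i j => g i fun l => r l j) (fun i => hg i ρ hρ r hr)
    · intro n
      letI : TopologicalSpace X := ⊥
      haveI : DiscreteTopology X := ⟨rfl⟩
      have h : {f : (Fin (n + 1) → X) → X | (⟨n, f⟩ : FinOp X) ∈ Polymorphisms (Invariants F)}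
          = ⋂ ρ ∈ Invariants F, ⋂ r : Fin (n + 1) → Fin (ρ.1 + 1) → X, ⋂ _ : ∀ i, r i ∈ ρ.2,
            (fun (f : (Fin (n + 1) → X) → X) (j : Fin (ρ.1 + 1)) => f fun i => r i j) ⁻¹' ρ.2 := by
        ext f
        simp only [Set.mem_iInter]
        exact Iff.rfl
      show IsClosed _
      rw [h]
      refine isClosed_biInter fun ρ _ => isClosed_iInter fun r => isClosed_iInter fun _ => ?_
      refine (isClosed_discrete ρ.2).preimage ?_
      exact continuous_pi fun j => continuous_apply _
    · intro f hf ρ hρ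
      exact hρ f hf
  · rintro ⟨n, f⟩ hf C ⟨⟨⟨hproj, hcomp⟩, hcl⟩, hFC⟩
    letI : TopologicalSpace X := ⊥
    have hc : IsClosed {f : (Fin (n + 1) → X) → X | (⟨n, f⟩ : FinOp X) ∈ C} := hcl n
    show f ∈ {f : (Fin (n + 1) → X) → X | (⟨n, f⟩ : FinOp X) ∈ C}
    rw [← hc.closure_eq, mem_closure_iff]
    intro o ho hfo
    obtain ⟨I, u, hu, hIo⟩ := isOpen_pi_iff.1 ho f hfo
    obtain ⟨p⟩ : Nonempty (Fin (n + 1) → X) := inferInstance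
    let a : Fin (I.toList.length + 1) → (Fin (n + 1) → X) := fun j => I.toList.getD j p
    let ρ : FinRel X := ⟨I.toList.length,
      {t | ∃ g : (Fin (n + 1) → X) → X, (⟨n, g⟩ : FinOp X) ∈ C ∧ t = fun j => g (a j)}⟩
    have hρ : ρ ∈ Invariants F := by
      rintro ⟨k, h⟩ hh r hr
      choose g hg hrg using hr
      refine ⟨fun x => h fun i => g i x, hcomp _ _ _ _ (hFC hh) hg, ?_⟩
      funext j
      simp only [hrg]
    obtain ⟨g, hg, hfg⟩ := hf ρ hρ (fun i j => a j i) (fun i => ⟨fun x => x i, hproj n i, rfl⟩)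
    refine ⟨g, hIo ?_, hg⟩
    intro x hx
    obtain ⟨j, hj, hjx⟩ := List.getElem_of_mem (Finset.mem_toList.2 hx)
    have h1 := congrFun hfg ⟨j, Nat.lt_succ_of_lt hj⟩
    have h2 : a ⟨j, by omega⟩ = x := by
      simp only [a]
      rw [List.getD_eq_getElem _ _ hj, hjx]
    have h3 : f x = g x := by
      rw [← h2]; exact h1
    rw [← h3]
    exact (hu x hx).2
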